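/- arXiv:1310.7790 — 2 statements merged into one kernel-verified Lean document; each statement's English description precedes it below -/
import Mathlib

section
/- Let e : ℕ → ℤ be a finitely supported function with e(n) = 0 for all n < 2. If the product ∏_n [n]^{e(n)}, formed in the unit group of RatFunc ℚ, is a constant rational function (i.e., lies in the image of the canonical embedding of ℚ into RatFunc ℚ), then e = 0 and the product equals 1. In particular, the q-integers [n] for n ≥ 2 generate a free abelian subgroup of (RatFunc ℚ)ˣ whose intersection with the nonzero constants is trivial. -/
/-- The q-integer `[n] = (v^n - v^{-n})/(v - v^{-1})` in `RatFunc ℚ`, where `v = RatFunc.X`. -/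
noncomputable def qint (n : ℕ) : RatFunc ℚ :=
  ((RatFunc.X : RatFunc ℚ) ^ (n : ℤ) - (RatFunc.X : RatFunc ℚ) ^ (-(n : ℤ))) /
    ((RatFunc.X : RatFunc ℚ) - (RatFunc.X : RatFunc ℚ)⁻¹)

open Polynomial in
/-- Rational functions which are regular and nonvanishing at `z`. -/
def GoodAt (z : ℂ) (x : RatFunc ℚ) : Prop :=
  ∃ p q : ℚ[X], aeval z p ≠ 0 ∧ aeval z q ≠ 0 ∧
    x * algebraMap ℚ[X] (RatFunc ℚ) q = algebraMap ℚ[X] (RatFunc ℚ) p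

open Polynomial in
theorem algMap_ne_zero_of_aeval {z : ℂ} {q : ℚ[X]} (h : aeval z q ≠ 0) :
    algebraMap ℚ[X] (RatFunc ℚ) q ≠ 0 := by
  intro h0
  apply h
  rw [(map_eq_zero_iff _ (RatFunc.algebraMap_injective ℚ)).1 h0, map_zero]

theorem GoodAt.mul {z : ℂ} {x y : RatFunc ℚ} (hx : GoodAt z x) (hy : GoodAt z y) :
    GoodAt z (x * y) := by
  obtain ⟨p, q, hp, hq, h⟩ := hx
  obtain ⟨p', q', hp', hq', h'⟩ := hy
  refine ⟨p * p', q * q', ?_, ?_, ?_⟩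
  · rw [map_mul]; exact mul_ne_zero hp hp'
  · rw [map_mul]; exact mul_ne_zero hq hq'
  · rw [map_mul, map_mul, ← h, ← h']; ring

theorem GoodAt.inv {z : ℂ} {x : RatFunc ℚ} (hx : GoodAt z x) : GoodAt z x⁻¹ := by
  obtain ⟨p, q, hp, hq, h⟩ := hx
  refine ⟨q, p, hq, hp, ?_⟩
  have hx0 : x ≠ 0 := by
    rintro rfl
    rw [zero_mul] at h
    exact algMap_ne_zero_of_aeval hp h.symm
  rw [← h, inv_mul_cancel_left₀ hx0]

theorem GoodAt.one (z : ℂ) : GoodAt z 1 := ⟨1, 1, by simp, by simp, by simp⟩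

theorem GoodAt.pow {z : ℂ} {x : RatFunc ℚ} (hx : GoodAt z x) (n : ℕ) : GoodAt z (x ^ n) := by
  induction n with
  | zero => rw [pow_zero]; exact GoodAt.one z
  | succ k ih => rw [pow_succ]; exact ih.mul hx

theorem GoodAt.zpow {z : ℂ} {x : RatFunc ℚ} (hx : GoodAt z x) (n : ℤ) : GoodAt z (x ^ n) := by
  obtain ⟨k, rfl | rfl⟩ := n.eq_nat_or_neg
  · rw [zpow_natCast]; exact hx.pow k
  · rw [zpow_neg, zpow_natCast]; exact (hx.pow k).inv

theorem GoodAt.prod {z : ℂ} (s : Finset ℕ) (f : ℕ → RatFunc ℚ) (h : ∀ n ∈ s, GoodAt z (f n)) :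
    GoodAt z (∏ n ∈ s, f n) :=
  Finset.prod_induction f (GoodAt z) (fun _ _ ha hb => ha.mul hb) (GoodAt.one z) h

open Polynomial in
theorem qint_mul (n : ℕ) (hn : 1 ≤ n) :
    qint n * algebraMap ℚ[X] (RatFunc ℚ) (X ^ (n - 1) * (X ^ 2 - 1)) =
      algebraMap ℚ[X] (RatFunc ℚ) (X ^ (2 * n) - 1) := by
  obtain ⟨m, rfl⟩ : ∃ m, n = m + 1 := ⟨n - 1, by omega⟩
  have hX : (RatFunc.X : RatFunc ℚ) ≠ 0 := RatFunc.X_ne_zero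
  have h2 : (RatFunc.X : RatFunc ℚ) ^ 2 - 1 ≠ 0 := by
    have : algebraMap ℚ[X] (RatFunc ℚ) (X ^ 2 - 1) ≠ 0 :=
      algMap_ne_zero_of_aeval (z := 0) (by simp)
    simpa using this
  have h3 : (RatFunc.X : RatFunc ℚ) - RatFunc.X⁻¹ = (RatFunc.X ^ 2 - 1) / RatFunc.X := by
    field_simp
  unfold qint
  rw [h3]
  simp only [map_mul, map_sub, map_pow, RatFunc.algebraMap_X, map_one, zpow_neg, zpow_natCast,
    Nat.add_sub_cancel]
  field_simp
  ring

theorem qint_ne_zero (n : ℕ) (hn : 1 ≤ n) : qint n ≠ 0 := by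
  intro h
  have := qint_mul n hn
  rw [h, zero_mul] at this
  refine algMap_ne_zero_of_aeval (z := 0) ?_ this.symm
  simp [show n ≠ 0 by omega]

/-- If a product `∏ₙ [n]^{e n}` of q-integers with exponents supported on `n ≥ 2` is a
constant rational function, then all exponents vanish and the product is `1`. -/
theorem qint_prod_eq_const_iff (e : ℕ →₀ ℤ) (he : ∀ n < 2, e n = 0)
    (hc : ∃ c : ℚ, (∏ n ∈ e.support, qint n ^ e n) = algebraMap ℚ (RatFunc ℚ) c) :
    e = 0 ∧ (∏ n ∈ e.support, qint n ^ e n) = 1 := by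
  suffices h : e = 0 by
    subst h
    simp
  by_contra hne
  obtain ⟨c, hc⟩ := hc
  have hsupp : ∀ n ∈ e.support, 2 ≤ n := by
    intro n hn
    by_contra hlt
    exact (Finsupp.mem_support_iff.1 hn) (he n (by omega))
  obtain ⟨N, hN, hmax⟩ := e.support.exists_max_image id (Finsupp.support_nonempty_iff.2 hne)
  have hN2 := hsupp N hN
  obtain ⟨z, hz⟩ : ∃ z : ℂ, IsPrimitiveRoot z (2 * N) :=
    ⟨_, Complex.isPrimitiveRoot_exp (2 * N) (by omega)⟩
  have hz0 : z ≠ 0 := hz.ne_zero (by omega)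
  have hne1 : ∀ m, 1 ≤ m → m < N → z ^ (2 * m) - 1 ≠ 0 := fun m h1 h2 =>
    sub_ne_zero.2 (hz.pow_ne_one_of_pos_of_lt (by omega) (by omega))
  have hden : ∀ n, Polynomial.aeval z
      ((Polynomial.X ^ (n - 1) * (Polynomial.X ^ 2 - 1) : Polynomial ℚ)) ≠ 0 := by
    intro n
    have := hne1 1 le_rfl (by omega)
    simp only [map_mul, map_sub, map_pow, Polynomial.aeval_X, map_one]
    exact mul_ne_zero (pow_ne_zero _ hz0) (by simpa using this)
  have hgood : ∀ n, 1 ≤ n → n < N → GoodAt z (qint n) := by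
    intro n h1 h2
    refine ⟨_, _, ?_, hden n, qint_mul n h1⟩
    simpa using hne1 n h1 h2
  have hc0 : c ≠ 0 := by
    rintro rfl
    rw [map_zero, Finset.prod_eq_zero_iff] at hc
    obtain ⟨n, hn, h⟩ := hc
    exact zpow_ne_zero _ (qint_ne_zero n (by have := hsupp n hn; omega)) h
  have hcgood : GoodAt z (algebraMap ℚ (RatFunc ℚ) c) := by
    refine ⟨Polynomial.C c, 1, by simpa using hc0, by simp, ?_⟩
    rw [map_one, mul_one, RatFunc.algebraMap_C]
    exact (eq_ratCast _ c).trans (eq_ratCast RatFunc.C c).symm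
  have hrest : GoodAt z (∏ n ∈ e.support.erase N, qint n ^ e n) := by
    refine GoodAt.prod _ _ fun n hn => ?_
    have hn' := Finset.mem_erase.1 hn
    have h1 := hsupp n hn'.2
    have h2 : n ≤ N := hmax n hn'.2
    exact (hgood n (by omega) (by have := hn'.1; omega)).zpow _
  have hNgood : GoodAt z (qint N ^ e N) := by
    have h := hcgood.mul hrest.inv
    rw [← hc, ← Finset.mul_prod_erase _ _ hN, mul_assoc, mul_inv_cancel₀, mul_one] at h
    · exact h
    · refine Finset.prod_ne_zero_iff.2 fun n hn => zpow_ne_zero _ (qint_ne_zero n ?_)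
      have := hsupp n (Finset.mem_of_mem_erase hn)
      omega
  have heN : e N ≠ 0 := Finsupp.mem_support_iff.1 hN
  obtain ⟨k, hk0, hk⟩ : ∃ k : ℕ, k ≠ 0 ∧ GoodAt z (qint N ^ k) := by
    obtain ⟨k, h | h⟩ := (e N).eq_nat_or_neg
    · refine ⟨k, by omega, ?_⟩
      rwa [h, zpow_natCast] at hNgood
    · refine ⟨k, by omega, ?_⟩
      rw [h, zpow_neg, zpow_natCast] at hNgood
      simpa using hNgood.inv
  obtain ⟨p, q, hp, hq, h⟩ := hk
  have hm := qint_mul N (by omega)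
  have key : (Polynomial.X ^ (2 * N) - 1 : Polynomial ℚ) ^ k * q =
      p * (Polynomial.X ^ (N - 1) * (Polynomial.X ^ 2 - 1)) ^ k := by
    apply RatFunc.algebraMap_injective ℚ
    rw [map_mul, map_pow, ← hm, map_mul _ p, ← h, map_pow]
    ring
  have key2 := congrArg (Polynomial.aeval z) key
  rw [map_mul, map_mul, map_pow, map_pow] at key2
  have hz1 : Polynomial.aeval z (Polynomial.X ^ (2 * N) - 1 : Polynomial ℚ) = 0 := by
    simp [hz.pow_eq_one]
  rw [hz1, zero_pow hk0, zero_mul] at key2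
  exact mul_ne_zero hp (pow_ne_zero _ (hden N)) key2.symm
end

section
/- Uniqueness of the rational/q-rational factorization: if λ and λ′ are positive rational numbers and g and g′ are q-rational numbers such that λ·g = λ′·g′ in RatFunc ℚ (where λ, λ′ are viewed as constant rational functions), then λ = λ′ and g = g′. -/
/-- A q-rational number: a finite product `∏ₙ [n]^{e n}` of q-integers with integer
exponents supported on `n ≥ 2`. -/
def IsQRat (f : RatFunc ℚ) : Prop :=
  ∃ e : ℕ →₀ ℤ, (∀ n < 2, e n = 0) ∧ f = ∏ n ∈ e.support, qint n ^ e n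

/-- Quotients of monic polynomials. -/
def MonicRat (f : RatFunc ℚ) : Prop :=
  ∃ p q : Polynomial ℚ, p.Monic ∧ q.Monic ∧
    f = algebraMap (Polynomial ℚ) (RatFunc ℚ) p / algebraMap (Polynomial ℚ) (RatFunc ℚ) q

theorem MonicRat.one : MonicRat 1 :=
  ⟨1, 1, Polynomial.monic_one, Polynomial.monic_one, by simp⟩

theorem MonicRat.mul {f g : RatFunc ℚ} (hf : MonicRat f) (hg : MonicRat g) :
    MonicRat (f * g) := by
  obtain ⟨p, q, hp, hq, rfl⟩ := hf
  obtain ⟨r, s, hr, hs, rfl⟩ := hg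
  exact ⟨p * r, q * s, hp.mul hr, hq.mul hs, by rw [map_mul, map_mul, div_mul_div_comm]⟩

theorem MonicRat.inv {f : RatFunc ℚ} (hf : MonicRat f) : MonicRat f⁻¹ := by
  obtain ⟨p, q, hp, hq, rfl⟩ := hf
  exact ⟨q, p, hq, hp, by rw [inv_div]⟩

theorem MonicRat.pow {f : RatFunc ℚ} (hf : MonicRat f) (n : ℕ) : MonicRat (f ^ n) := by
  induction n with
  | zero => simpa using MonicRat.one
  | succ n ih => rw [pow_succ]; exact ih.mul hf

theorem MonicRat.zpow {f : RatFunc ℚ} (hf : MonicRat f) (n : ℤ) : MonicRat (f ^ n) := by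
  cases n with
  | ofNat n => simpa using hf.pow n
  | negSucc n => rw [zpow_negSucc]; exact (hf.pow _).inv

theorem monicRat_sub (n : ℕ) (hn : n ≠ 0) :
    MonicRat ((RatFunc.X : RatFunc ℚ) ^ (n : ℤ) - (RatFunc.X : RatFunc ℚ) ^ (-(n : ℤ))) := by
  refine ⟨Polynomial.X ^ (2 * n) - Polynomial.C 1, Polynomial.X ^ n,
    Polynomial.monic_X_pow_sub_C _ (by omega), Polynomial.monic_X_pow n, ?_⟩
  have hX : (RatFunc.X : RatFunc ℚ) ^ n ≠ 0 := pow_ne_zero _ RatFunc.X_ne_zero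
  simp only [map_sub, map_pow, RatFunc.algebraMap_X, map_one, zpow_neg, zpow_natCast]
  rw [eq_div_iff hX, sub_mul, inv_mul_cancel₀ hX]
  ring

theorem monicRat_qint (n : ℕ) (hn : n ≠ 0) : MonicRat (qint n) := by
  have h1 := monicRat_sub 1 one_ne_zero
  simp only [Nat.cast_one, zpow_one, zpow_neg] at h1
  rw [qint, div_eq_mul_inv]
  exact (monicRat_sub n hn).mul h1.inv

theorem IsQRat.monicRat {f : RatFunc ℚ} (hf : IsQRat f) : MonicRat f := by
  obtain ⟨e, he, rfl⟩ := hf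
  refine Finset.prod_induction _ MonicRat (fun _ _ => MonicRat.mul) MonicRat.one ?_
  intro n hn
  refine (monicRat_qint n ?_).zpow _
  rintro rfl
  exact (Finsupp.mem_support_iff.mp hn) (he 0 (by norm_num))

/-- Uniqueness of the rational/q-rational factorization: if `λ·g = λ'·g'` with `λ, λ'`
positive rationals and `g, g'` q-rational numbers, then `λ = λ'` and `g = g'`. -/
theorem rat_qrat_factorization_unique (lam lam' : ℚ) (hlam : 0 < lam) (hlam' : 0 < lam')
    (g g' : RatFunc ℚ) (hg : IsQRat g) (hg' : IsQRat g')
    (h : algebraMap ℚ (RatFunc ℚ) lam * g = algebraMap ℚ (RatFunc ℚ) lam' * g') :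
    lam = lam' ∧ g = g' := by
  have key : lam = lam' := by
    obtain ⟨p, q, hp, hq, rfl⟩ := hg.monicRat
    obtain ⟨r, s, hr, hs, rfl⟩ := hg'.monicRat
    have hq0 : algebraMap (Polynomial ℚ) (RatFunc ℚ) q ≠ 0 :=
      RatFunc.algebraMap_ne_zero hq.ne_zero
    have hs0 : algebraMap (Polynomial ℚ) (RatFunc ℚ) s ≠ 0 :=
      RatFunc.algebraMap_ne_zero hs.ne_zero
    rw [IsScalarTower.algebraMap_apply ℚ (Polynomial ℚ) (RatFunc ℚ) lam,
      IsScalarTower.algebraMap_apply ℚ (Polynomial ℚ) (RatFunc ℚ) lam',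
      ← mul_div_assoc, ← mul_div_assoc, div_eq_div_iff hq0 hs0,
      ← map_mul, ← map_mul, ← map_mul, ← map_mul] at h
    have h2 := congrArg Polynomial.leadingCoeff (RatFunc.algebraMap_injective ℚ h)
    simpa [Polynomial.leadingCoeff_mul, hp.leadingCoeff, hq.leadingCoeff, hr.leadingCoeff,
      hs.leadingCoeff] using h2
  refine ⟨key, ?_⟩
  subst key
  refine mul_left_cancel₀ ?_ h
  simpa using hlam.ne'
end
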